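/- There exist b > 0 and q ∈ (−1/b, b) with f(q,b) = q³b − q²b² − q² + 2qb⁵ + qb + 3b⁴ = 1 (so that the pentagon P = P_{q,b} and its polar P° both have barycenter at the origin) such that tr( cov(P) · cov(P°) ) > 1/8. -/

import Mathlib

/-!
The pentagon `P = P_{q,b}` is, up to reflection, its own polar: `P° = -P`. Hence the trace in
question is `tr (cov(P)²)`, which is at least the sum of the squares of the two diagonal entries of
`cov(P)`. Since `P` is a region `|y| ≤ h x` with `h` affine on `[-1/b, q]` and on `[q, b]`, these
entries are explicit: numerators and denominators are integrals of polynomials of degree at most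
three over the two pieces.

For `q = b` the solution of `f(q, b) = 1` is the regular triangle, where the trace is exactly `1/8`.
On the ray `q = b / 2` the equation is a cubic in `b²` with a root `b² ≈ 0.508`, and the diagonal
entries are rational functions of `b²`, with values about `0.2473` and `0.2575` at that root; the
sum of their squares is about `0.1275`.
-/

open MeasureTheory

noncomputable section

/-- The polar body `K° = {y | ⟨x, y⟩ ≤ 1 for all x ∈ K}` in the plane. -/
def polarBody (K : Set (Fin 2 → ℝ)) : Set (Fin 2 → ℝ) :=
  {y | ∀ x ∈ K, x 0 * y 0 + x 1 * y 1 ≤ 1}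

/-- The volume product `vp(K) = |K| · |K°|`. -/
def vp (K : Set (Fin 2 → ℝ)) : ℝ :=
  (volume K).toReal * (volume (polarBody K)).toReal

/-- The barycenter `G_A = |A|⁻¹ ∫_A x dx`. -/
def bary (A : Set (Fin 2 → ℝ)) : Fin 2 → ℝ :=
  (volume A).toReal⁻¹ • ∫ x in A, x

/-- The covariance matrix `cov(K)_{ij} = |K|⁻¹ ∫_K x_i x_j dx`. -/
def covM (K : Set (Fin 2 → ℝ)) : Matrix (Fin 2) (Fin 2) ℝ :=
  Matrix.of fun i j => (volume K).toReal⁻¹ * ∫ x in K, x i * x j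

/-- The pentagon `P_{q,b}`: convex hull of `(-1/b, 0)`, `(q, ±r)`, `(b, ±c)`
where `r = √(1+q²)` and `c = (1+bq)/√(1+q²)`. -/
def pent (q b : ℝ) : Set (Fin 2 → ℝ) :=
  convexHull ℝ
    {![-1/b, 0], ![q, Real.sqrt (1 + q ^ 2)], ![q, -Real.sqrt (1 + q ^ 2)],
      ![b, (1 + b * q) / Real.sqrt (1 + q ^ 2)], ![b, -((1 + b * q) / Real.sqrt (1 + q ^ 2))]}

lemma abs_le_div_iff {a w y : ℝ} (hw : 0 < w) : |y| ≤ a / w ↔ y * w ≤ a ∧ -(y * w) ≤ a := by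
  rw [abs_le', le_div_iff₀ hw, le_div_iff₀ hw, neg_mul]

lemma convex_polarBody (K : Set (Fin 2 → ℝ)) : Convex ℝ (polarBody K) := by
  intro y hy z hz s t hs ht hst x hx
  have hxy := mul_le_mul_of_nonneg_left (hy x hx) hs
  have hxz := mul_le_mul_of_nonneg_left (hz x hx) ht
  simp only [Pi.add_apply, Pi.smul_apply, smul_eq_mul]
  linarith

lemma polarBody_convexHull (S : Set (Fin 2 → ℝ)) :
    polarBody (convexHull ℝ S) = polarBody S := by
  refine Set.Subset.antisymm (fun y hy x hx => hy x (subset_convexHull ℝ S hx)) fun y hy x hx => ?_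
  have hS : S ⊆ polarBody {y} := by
    rintro z hz _ rfl
    linarith [hy z hz]
  linarith [convexHull_min hS (convex_polarBody {y}) hx y rfl]

lemma covM_neg (K : Set (Fin 2 → ℝ)) : covM (-K) = covM K := by
  have hmoment (i j : Fin 2) : ∫ x in -K, x i * x j = ∫ x in K, x i * x j := by
    simpa using (Measure.measurePreserving_neg volume).setIntegral_preimage_emb
      (MeasurableEquiv.neg (Fin 2 → ℝ)).measurableEmbedding (fun x => x i * x j) K
  ext i j
  simp only [covM, Matrix.of_apply, Measure.measure_neg, hmoment]

lemma sq_add_sq_le_trace_covM_mul_self (K : Set (Fin 2 → ℝ)) :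
    covM K 0 0 ^ 2 + covM K 1 1 ^ 2 ≤ (covM K * covM K).trace := by
  have hsymm : covM K 1 0 = covM K 0 1 := by simp only [covM, Matrix.of_apply, mul_comm]
  simp only [Matrix.trace_fin_two, Matrix.mul_apply, Fin.sum_univ_two, hsymm]
  nlinarith [sq_nonneg (covM K 0 1)]

/-- The planar region `|y| ≤ h x` over `x ∈ s`, symmetric about the first axis. -/
def symmRegion (s : Set ℝ) (h : ℝ → ℝ) : Set (Fin 2 → ℝ) :=
  {p | p 0 ∈ s ∧ |p 1| ≤ h (p 0)}

section SymmRegion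

variable {s : Set ℝ} {h : ℝ → ℝ}

lemma isCompact_symmRegion (hs : IsCompact s) (hh : Continuous h) :
    IsCompact (symmRegion s h) := by
  obtain ⟨M, hM⟩ := hs.exists_bound_of_continuousOn hh.continuousOn
  have hbox : IsCompact (Set.univ.pi ![s, Set.Icc (-M) M]) :=
    isCompact_univ_pi (Fin.forall_fin_two.2 ⟨hs, isCompact_Icc⟩)
  refine hbox.of_isClosed_subset ?_ fun p hp => ?_
  · exact (hs.isClosed.preimage (continuous_apply 0)).inter
      (isClosed_le (continuous_apply 1).abs (hh.comp (continuous_apply 0)))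
  · rw [Set.mem_univ_pi, Fin.forall_fin_two]
    exact ⟨hp.1, abs_le.1 (hp.2.trans ((le_abs_self _).trans (hM _ hp.1)))⟩

lemma measurableSet_symmRegion (hs : MeasurableSet s) (hh : Measurable h) :
    MeasurableSet (symmRegion s h) :=
  (measurable_pi_apply 0 hs).inter
    (measurableSet_le (measurable_pi_apply 1).abs (hh.comp (measurable_pi_apply 0)))

lemma setIntegral_symmRegion {E : Type*} [NormedAddCommGroup E] [NormedSpace ℝ E]
    (hs : MeasurableSet s) (hh : Measurable h) {f : (Fin 2 → ℝ) → E}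
    (hf : IntegrableOn f (symmRegion s h)) :
    ∫ p in symmRegion s h, f p = ∫ x in s, ∫ y in Set.Icc (-h x) (h x), f ![x, y] := by
  have hR := measurableSet_symmRegion hs hh
  have he := (volume_preserving_finTwoArrow ℝ).symm
  have hint : Integrable (fun z : ℝ × ℝ => (symmRegion s h).indicator f ![z.1, z.2]) :=
    (he.integrable_comp_emb (MeasurableEquiv.measurableEmbedding _)).2 (hf.integrable_indicator hR)
  have hslice (x y : ℝ) : (symmRegion s h).indicator f ![x, y] =
      s.indicator (fun x => (Set.Icc (-h x) (h x)).indicator (fun y => f ![x, y]) y) x := by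
    have hmem : ![x, y] ∈ symmRegion s h ↔ x ∈ s ∧ y ∈ Set.Icc (-h x) (h x) := by
      simp [symmRegion, abs_le]
    by_cases hx : x ∈ s <;> by_cases hy : y ∈ Set.Icc (-h x) (h x) <;>
      simp only [Set.indicator, hmem, hx, hy, and_self, and_true, and_false, if_true, if_false]
  calc ∫ p in symmRegion s h, f p
      = ∫ z : ℝ × ℝ, (symmRegion s h).indicator f ![z.1, z.2] := by
        rw [← integral_indicator hR]
        exact (he.integral_comp (MeasurableEquiv.measurableEmbedding _) _).symm
    _ = ∫ x, ∫ y, (symmRegion s h).indicator f ![x, y] := integral_prod _ hint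
    _ = ∫ x in s, ∫ y in Set.Icc (-h x) (h x), f ![x, y] := by
        rw [← integral_indicator hs]
        congr 1 with x
        simp only [hslice]
        by_cases hx : x ∈ s
        · simp only [Set.indicator_of_mem hx, integral_indicator measurableSet_Icc]
        · simp only [Set.indicator_of_notMem hx, integral_zero]

lemma symmRegion_Icc_subset {K : Set (Fin 2 → ℝ)} {a b : ℝ} (hK : Convex ℝ K)
    (hh : ConvexOn ℝ (Set.Icc a b) h) (ha : ![a, h a] ∈ K) (ha' : ![a, -h a] ∈ K)
    (hb : ![b, h b] ∈ K) (hb' : ![b, -h b] ∈ K) : symmRegion (Set.Icc a b) h ⊆ K := by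
  rintro p ⟨hp0, hp1⟩
  have hab : a ≤ b := hp0.1.trans hp0.2
  obtain ⟨α, β, hα, hβ, hαβ, hx⟩ := (Convex.mem_Icc hab).1 hp0
  set H := α * h a + β * h b with hH
  have hpH : |p 1| ≤ H := hp1.trans (hx ▸ hh.2 (Set.left_mem_Icc.2 hab) (Set.right_mem_Icc.2 hab)
    hα hβ hαβ)
  have htop : ![p 0, H] ∈ K := by
    convert hK ha hb hα hβ hαβ using 1
    ext i; fin_cases i <;> simp [← hx, hH]
  have hbot : ![p 0, -H] ∈ K := by
    convert hK ha' hb' hα hβ hαβ using 1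
    ext i; fin_cases i <;> simp [← hx, hH, add_comm]
  obtain ⟨σ, τ, hσ, hτ, hστ, hy⟩ :=
    (Convex.mem_Icc (neg_le_self ((abs_nonneg _).trans hpH))).1 (abs_le.1 hpH)
  convert hK hbot htop hσ hτ hστ using 1
  ext i; fin_cases i
  · simp [← add_mul, hστ]
  · simp [← hy]

variable {a b : ℝ}

lemma setIntegral_symmRegion_Icc (hab : a ≤ b) (hh : Continuous h)
    (hpos : ∀ x ∈ Set.Icc a b, 0 ≤ h x) {f : (Fin 2 → ℝ) → ℝ} (hf : Continuous f) :
    ∫ p in symmRegion (Set.Icc a b) h, f p = ∫ x in a..b, ∫ y in -h x..h x, f ![x, y] := by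
  rw [setIntegral_symmRegion measurableSet_Icc hh.measurable
      (hf.continuousOn.integrableOn_compact (isCompact_symmRegion isCompact_Icc hh)),
    intervalIntegral.integral_of_le hab, ← integral_Icc_eq_integral_Ioc]
  refine setIntegral_congr_fun measurableSet_Icc fun x hx => ?_
  simp only [intervalIntegral.integral_of_le (neg_le_self (hpos x hx)),
    integral_Icc_eq_integral_Ioc]

lemma volume_symmRegion_Icc (hab : a ≤ b) (hh : Continuous h)
    (hpos : ∀ x ∈ Set.Icc a b, 0 ≤ h x) :
    (volume (symmRegion (Set.Icc a b) h)).toReal = 2 * ∫ x in a..b, h x := by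
  have hone := setIntegral_symmRegion_Icc hab hh hpos (f := fun _ => 1) continuous_const
  simp only [setIntegral_const, smul_eq_mul, mul_one, Measure.real] at hone
  rw [hone, ← intervalIntegral.integral_const_mul]
  congr 1 with x
  rw [integral_one]
  ring

lemma covM_symmRegion_Icc_zero_zero (hab : a ≤ b) (hh : Continuous h)
    (hpos : ∀ x ∈ Set.Icc a b, 0 ≤ h x) :
    covM (symmRegion (Set.Icc a b) h) 0 0 = (∫ x in a..b, x ^ 2 * h x) / ∫ x in a..b, h x := by
  have hmoment : ∫ p in symmRegion (Set.Icc a b) h, p 0 * p 0 = 2 * ∫ x in a..b, x ^ 2 * h x := by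
    rw [setIntegral_symmRegion_Icc hab hh hpos (by fun_prop),
      ← intervalIntegral.integral_const_mul]
    congr 1 with x
    simp only [Matrix.cons_val_zero, intervalIntegral.integral_const, smul_eq_mul]
    ring
  rw [covM, Matrix.of_apply, hmoment, volume_symmRegion_Icc hab hh hpos, inv_mul_eq_div,
    mul_div_mul_left _ _ two_ne_zero]

lemma covM_symmRegion_Icc_one_one (hab : a ≤ b) (hh : Continuous h)
    (hpos : ∀ x ∈ Set.Icc a b, 0 ≤ h x) :
    covM (symmRegion (Set.Icc a b) h) 1 1 =
      (∫ x in a..b, h x ^ 3) / (3 * ∫ x in a..b, h x) := by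
  have hmoment : ∫ p in symmRegion (Set.Icc a b) h, p 1 * p 1 =
      2 * ((∫ x in a..b, h x ^ 3) / 3) := by
    rw [setIntegral_symmRegion_Icc hab hh hpos (by fun_prop),
      ← intervalIntegral.integral_div, ← intervalIntegral.integral_const_mul]
    congr 1 with x
    simp only [Matrix.cons_val_one, Matrix.cons_val_zero, ← sq, integral_pow]
    ring
  rw [covM, Matrix.of_apply, hmoment, volume_symmRegion_Icc hab hh hpos, inv_mul_eq_div,
    mul_div_mul_left _ _ two_ne_zero, div_div]

end SymmRegion

lemma convexOn_of_eqOn_affine {f : ℝ → ℝ} {s t k m : ℝ}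
    (hf : Set.EqOn f (fun x => k + m * x) (Set.Icc s t)) :
    ConvexOn ℝ (Set.Icc s t) f := by
  have haffine : ConvexOn ℝ (Set.Icc s t) fun x => k + m * x := by
    refine ⟨convex_Icc s t, fun x _ y _ α β _ _ hαβ => le_of_eq ?_⟩
    simp only [smul_eq_mul]
    linear_combination (-k) * hαβ
  exact haffine.congr hf.symm

section AffineIntegral

lemma integral_cubic (a₀ a₁ a₂ a₃ s t : ℝ) :
    ∫ x in s..t, (a₀ + a₁ * x + a₂ * x ^ 2 + a₃ * x ^ 3) =
      a₀ * (t - s) + a₁ * (t ^ 2 - s ^ 2) / 2 + a₂ * (t ^ 3 - s ^ 3) / 3 +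
        a₃ * (t ^ 4 - s ^ 4) / 4 := by
  have hprim (x : ℝ) : HasDerivAt
      (fun x => a₀ * x + a₁ / 2 * x ^ 2 + a₂ / 3 * x ^ 3 + a₃ / 4 * x ^ 4)
      (a₀ + a₁ * x + a₂ * x ^ 2 + a₃ * x ^ 3) x := by
    refine (((((hasDerivAt_id x).const_mul a₀).add ((hasDerivAt_pow 2 x).const_mul (a₁ / 2))).add
      ((hasDerivAt_pow 3 x).const_mul (a₂ / 3))).add
      ((hasDerivAt_pow 4 x).const_mul (a₃ / 4))).congr_deriv ?_
    push_cast
    ring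
  rw [intervalIntegral.integral_eq_sub_of_hasDerivAt (fun x _ => hprim x)
    (Continuous.intervalIntegrable (by fun_prop) s t)]
  ring

variable {f : ℝ → ℝ} {s t k m : ℝ}

lemma integral_affine (hf : Set.EqOn f (fun x => k + m * x) (Set.uIcc s t)) :
    ∫ x in s..t, f x = (t - s) * (f s + f t) / 2 := by
  have hcubic : ∀ x ∈ Set.uIcc s t, f x = k + m * x + 0 * x ^ 2 + 0 * x ^ 3 := fun x hx => by
    rw [hf hx]
    ring
  rw [intervalIntegral.integral_congr hcubic, integral_cubic, hf Set.left_mem_uIcc,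
    hf Set.right_mem_uIcc]
  ring

lemma integral_sq_mul_affine (hf : Set.EqOn f (fun x => k + m * x) (Set.uIcc s t)) :
    ∫ x in s..t, x ^ 2 * f x = (t - s) *
      ((3 * s ^ 2 + 2 * s * t + t ^ 2) * f s + (s ^ 2 + 2 * s * t + 3 * t ^ 2) * f t) / 12 := by
  have hcubic : ∀ x ∈ Set.uIcc s t, x ^ 2 * f x = 0 + 0 * x + k * x ^ 2 + m * x ^ 3 :=
    fun x hx => by
      rw [hf hx]
      ring
  rw [intervalIntegral.integral_congr hcubic, integral_cubic, hf Set.left_mem_uIcc,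
    hf Set.right_mem_uIcc]
  ring

lemma integral_affine_pow_three (hf : Set.EqOn f (fun x => k + m * x) (Set.uIcc s t)) :
    ∫ x in s..t, f x ^ 3 = (t - s) * ((f s + f t) * (f s ^ 2 + f t ^ 2)) / 4 := by
  have hcubic : ∀ x ∈ Set.uIcc s t, f x ^ 3 =
      k ^ 3 + 3 * k ^ 2 * m * x + 3 * k * m ^ 2 * x ^ 2 + m ^ 3 * x ^ 3 := fun x hx => by
    rw [hf hx]
    ring
  rw [intervalIntegral.integral_congr hcubic, integral_cubic, hf Set.left_mem_uIcc,
    hf Set.right_mem_uIcc]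
  ring

end AffineIntegral

/-- The half-height `r = √(1 + q²)` of the pentagon `pent q b` at `x = q`. -/
def midHeight (q : ℝ) : ℝ := √(1 + q ^ 2)

/-- The half-height `c = (1 + b q) / r` of the pentagon `pent q b` at its right edge `x = b`. -/
def endHeight (q b : ℝ) : ℝ := (1 + b * q) / midHeight q

/-- The vertex set of the pentagon `pent q b`, in terms of its half-heights `r` and `c`. -/
def pentVertices (q b : ℝ) : Set (Fin 2 → ℝ) :=
  {![-1 / b, 0], ![q, midHeight q], ![q, -midHeight q], ![b, endHeight q b],
    ![b, -endHeight q b]}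

/-- The half-height of the pentagon `pent q b` at abscissa `x`. The two terms of the minimum are
the half-planes polar to the vertices `(b, ±c)` and `(q, ±r)`. -/
def pentHeight (q b x : ℝ) : ℝ := min ((1 + b * x) / endHeight q b) ((1 + q * x) / midHeight q)

section Pentagon

variable {q b : ℝ}

lemma midHeight_sq (q : ℝ) : midHeight q ^ 2 = 1 + q ^ 2 := Real.sq_sqrt (by positivity)

lemma midHeight_pos (q : ℝ) : 0 < midHeight q := Real.sqrt_pos.2 (by positivity)

lemma endHeight_pos (hbq : 0 < 1 + b * q) : 0 < endHeight q b := div_pos hbq (midHeight_pos q)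

lemma continuous_pentHeight (q b : ℝ) : Continuous (pentHeight q b) := by
  unfold pentHeight
  fun_prop

lemma div_midHeight_sub_div_endHeight (hbq : 0 < 1 + b * q) (x : ℝ) :
    (1 + q * x) / midHeight q - (1 + b * x) / endHeight q b =
      (b - q) * (q - x) / (midHeight q * (1 + b * q)) := by
  have hr := (midHeight_pos q).ne'
  have hbq' : 1 + q * b ≠ 0 := mul_comm b q ▸ hbq.ne'
  rw [endHeight]
  field_simp
  rw [midHeight_sq]
  ring

lemma pentHeight_of_le (hbq : 0 < 1 + b * q) (hqb : q ≤ b) {x : ℝ} (hx : x ≤ q) :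
    pentHeight q b x = 1 / endHeight q b + b / endHeight q b * x := by
  rw [div_mul_eq_mul_div, ← add_div]
  refine min_eq_left (sub_nonneg.1 ?_)
  rw [div_midHeight_sub_div_endHeight hbq]
  exact div_nonneg (mul_nonneg (sub_nonneg.2 hqb) (sub_nonneg.2 hx))
    (mul_pos (midHeight_pos q) hbq).le

lemma pentHeight_of_ge (hbq : 0 < 1 + b * q) (hqb : q ≤ b) {x : ℝ} (hx : q ≤ x) :
    pentHeight q b x = 1 / midHeight q + q / midHeight q * x := by
  rw [div_mul_eq_mul_div, ← add_div]
  refine min_eq_right (sub_nonpos.1 ?_)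
  rw [div_midHeight_sub_div_endHeight hbq]
  exact div_nonpos_of_nonpos_of_nonneg
    (mul_nonpos_of_nonneg_of_nonpos (sub_nonneg.2 hqb) (sub_nonpos.2 hx))
    (mul_pos (midHeight_pos q) hbq).le

lemma neg_one_div_lt (hb : 0 < b) (hbq : 0 < 1 + b * q) : -1 / b < q := by
  rw [div_lt_iff₀ hb]
  linarith

lemma pentHeight_neg_one_div (hb : 0 < b) (hbq : 0 < 1 + b * q) (hqb : q ≤ b) :
    pentHeight q b (-1 / b) = 0 := by
  rw [pentHeight_of_le hbq hqb (neg_one_div_lt hb hbq).le]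
  field_simp
  ring

lemma pentHeight_self (hbq : 0 < 1 + b * q) (hqb : q ≤ b) : pentHeight q b q = midHeight q := by
  rw [pentHeight_of_ge hbq hqb le_rfl]
  have hr := (midHeight_pos q).ne'
  field_simp
  rw [midHeight_sq]

lemma pentHeight_right (hbq : 0 < 1 + b * q) (hqb : q ≤ b) :
    pentHeight q b b = endHeight q b := by
  rw [pentHeight_of_ge hbq hqb hqb, endHeight]
  ring

lemma pentHeight_nonneg (hb : 0 < b) (hbq : 0 < 1 + b * q) (hqb : q ≤ b) {x : ℝ}
    (hx : x ∈ Set.Icc (-1 / b) b) : 0 ≤ pentHeight q b x := by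
  have hbx : 0 ≤ 1 + b * x := by linarith [(div_le_iff₀ hb).1 hx.1]
  have hqx : 0 ≤ 1 + q * x := by
    rcases le_total 0 x with hx₀ | hx₀
    · rcases le_total 0 q with hq | hq
      · positivity
      · linarith [mul_le_mul_of_nonpos_left hx.2 hq]
    · nlinarith
  exact le_min (div_nonneg hbx (endHeight_pos hbq).le) (div_nonneg hqx (midHeight_pos q).le)

lemma pent_eq_convexHull (q b : ℝ) : pent q b = convexHull ℝ (pentVertices q b) := rfl

lemma polarBody_pent_eq_neg_symmRegion (hb : 0 < b) (hbq : 0 < 1 + b * q) :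
    polarBody (pent q b) = -symmRegion (Set.Icc (-1 / b) b) (pentHeight q b) := by
  ext y
  have hapex : -1 / b * y 0 + 0 * y 1 ≤ 1 ↔ -y 0 ≤ b := by
    rw [zero_mul, add_zero, div_mul_eq_mul_div, div_le_iff₀ hb, neg_one_mul, one_mul]
  have hleft : -1 / b ≤ -y 0 ↔ b * y 0 ≤ 1 := by
    rw [div_le_iff₀ hb]
    constructor <;> intro <;> linarith
  rw [pent_eq_convexHull, polarBody_convexHull]
  simp only [polarBody, pentVertices, symmRegion, pentHeight, Set.mem_neg, Set.mem_ofPred_eq,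
    Set.forall_mem_insert, Set.mem_singleton_iff, forall_eq, Matrix.cons_val_zero,
    Matrix.cons_val_one, Pi.neg_apply, Set.mem_Icc, le_min_iff, hapex, hleft,
    abs_le_div_iff (midHeight_pos q), abs_le_div_iff (endHeight_pos hbq)]
  constructor
  · rintro ⟨hy, hmid, hmid', hend, hend'⟩
    refine ⟨⟨?_, hy⟩, ⟨?_, ?_⟩, ?_, ?_⟩ <;> linarith
  · rintro ⟨⟨-, hy⟩, ⟨hend, hend'⟩, hmid, hmid'⟩
    refine ⟨?_, ?_, ?_, ?_, ?_⟩ <;> linarith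

lemma pentHeight_eqOn_affine_left (hb : 0 < b) (hbq : 0 < 1 + b * q) (hqb : q ≤ b) :
    Set.EqOn (pentHeight q b) (fun x => 1 / endHeight q b + b / endHeight q b * x)
      (Set.uIcc (-1 / b) q) := by
  rw [Set.uIcc_of_le (neg_one_div_lt hb hbq).le]
  exact fun x hx => pentHeight_of_le hbq hqb hx.2

lemma pentHeight_eqOn_affine_right (hbq : 0 < 1 + b * q) (hqb : q ≤ b) :
    Set.EqOn (pentHeight q b) (fun x => 1 / midHeight q + q / midHeight q * x)
      (Set.uIcc q b) := by
  rw [Set.uIcc_of_le hqb]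
  exact fun x hx => pentHeight_of_ge hbq hqb hx.1

lemma pentVertices_subset_symmRegion (hb : 0 < b) (hbq : 0 < 1 + b * q) (hqb : q ≤ b) :
    pentVertices q b ⊆ symmRegion (Set.Icc (-1 / b) b) (pentHeight q b) := by
  have hq := (neg_one_div_lt hb hbq).le
  have hr := (midHeight_pos q).le
  have hc := (endHeight_pos hbq).le
  rintro v (rfl | rfl | rfl | rfl | rfl) <;>
    simp [-one_div, symmRegion, pentHeight_neg_one_div hb hbq hqb, pentHeight_self hbq hqb,
      pentHeight_right hbq hqb, abs_of_nonneg, hr, hc, hqb, hq, hq.trans hqb]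

lemma symmRegion_subset_pent (hb : 0 < b) (hbq : 0 < 1 + b * q) (hqb : q ≤ b) :
    symmRegion (Set.Icc (-1 / b) b) (pentHeight q b) ⊆ pent q b := by
  have hconvex : Convex ℝ (pent q b) := convex_convexHull ℝ _
  have hleft : symmRegion (Set.Icc (-1 / b) q) (pentHeight q b) ⊆ pent q b := by
    refine symmRegion_Icc_subset hconvex
      (convexOn_of_eqOn_affine fun x hx => pentHeight_of_le hbq hqb hx.2) ?_ ?_ ?_ ?_
    all_goals
      simp only [pentHeight_neg_one_div hb hbq hqb, pentHeight_self hbq hqb, neg_zero]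
      exact subset_convexHull ℝ _ (by simp [midHeight])
  have hright : symmRegion (Set.Icc q b) (pentHeight q b) ⊆ pent q b := by
    refine symmRegion_Icc_subset hconvex
      (convexOn_of_eqOn_affine fun x hx => pentHeight_of_ge hbq hqb hx.1) ?_ ?_ ?_ ?_
    all_goals
      simp only [pentHeight_self hbq hqb, pentHeight_right hbq hqb]
      exact subset_convexHull ℝ _ (by simp [midHeight, endHeight])
  rintro p ⟨hx, hy⟩
  rcases le_total (p 0) q with hpq | hpq
  · exact hleft ⟨⟨hx.1, hpq⟩, hy⟩
  · exact hright ⟨⟨hpq, hx.2⟩, hy⟩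

lemma pent_eq_symmRegion (hb : 0 < b) (hbq : 0 < 1 + b * q) (hqb : q ≤ b) :
    pent q b = symmRegion (Set.Icc (-1 / b) b) (pentHeight q b) := by
  have hconvex : Convex ℝ (symmRegion (Set.Icc (-1 / b) b) (pentHeight q b)) := by
    -- The region is the reflected polar body, and polar bodies are convex.
    rw [← neg_eq_iff_eq_neg.2 (polarBody_pent_eq_neg_symmRegion hb hbq)]
    exact (convex_polarBody _).neg
  exact (convexHull_min (pentVertices_subset_symmRegion hb hbq hqb) hconvex).antisymm
    (symmRegion_subset_pent hb hbq hqb)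

lemma polarBody_pent (hb : 0 < b) (hbq : 0 < 1 + b * q) (hqb : q ≤ b) :
    polarBody (pent q b) = -pent q b := by
  rw [polarBody_pent_eq_neg_symmRegion hb hbq, pent_eq_symmRegion hb hbq hqb]

/-- The ratio `c / r` of the two half-heights of the pentagon `pent q b`. Its moments are rational
functions of `q`, `b`, `r²` and this ratio. -/
def heightRatio (q b : ℝ) : ℝ := (1 + b * q) / (1 + q ^ 2)

lemma endHeight_eq_heightRatio_mul (q b : ℝ) : endHeight q b = heightRatio q b * midHeight q := by
  have hr := (midHeight_pos q).ne'
  rw [endHeight, heightRatio, ← midHeight_sq]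
  field_simp

lemma integral_pentHeight (hb : 0 < b) (hbq : 0 < 1 + b * q) (hqb : q ≤ b) :
    ∫ x in -1 / b..b, pentHeight q b x =
      midHeight q * ((q + 1 / b) + (b - q) * (1 + heightRatio q b)) / 2 := by
  have hint (s t : ℝ) : IntervalIntegrable (pentHeight q b) volume s t :=
    (continuous_pentHeight q b).intervalIntegrable s t
  rw [← intervalIntegral.integral_add_adjacent_intervals (hint _ q) (hint q _),
    integral_affine (pentHeight_eqOn_affine_left hb hbq hqb),
    integral_affine (pentHeight_eqOn_affine_right hbq hqb),
    pentHeight_neg_one_div hb hbq hqb, pentHeight_self hbq hqb, pentHeight_right hbq hqb,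
    endHeight_eq_heightRatio_mul]
  ring

lemma integral_sq_mul_pentHeight (hb : 0 < b) (hbq : 0 < 1 + b * q) (hqb : q ≤ b) :
    ∫ x in -1 / b..b, x ^ 2 * pentHeight q b x =
      midHeight q * ((q + 1 / b) * (1 / b ^ 2 - 2 * q / b + 3 * q ^ 2) + (b - q) *
        (3 * q ^ 2 + 2 * q * b + b ^ 2 + heightRatio q b * (q ^ 2 + 2 * q * b + 3 * b ^ 2))) /
        12 := by
  have hint (s t : ℝ) : IntervalIntegrable (fun x => x ^ 2 * pentHeight q b x) volume s t :=
    ((continuous_id.pow 2).mul (continuous_pentHeight q b)).intervalIntegrable s t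
  rw [← intervalIntegral.integral_add_adjacent_intervals (hint _ q) (hint q _),
    integral_sq_mul_affine (pentHeight_eqOn_affine_left hb hbq hqb),
    integral_sq_mul_affine (pentHeight_eqOn_affine_right hbq hqb),
    pentHeight_neg_one_div hb hbq hqb, pentHeight_self hbq hqb, pentHeight_right hbq hqb,
    endHeight_eq_heightRatio_mul]
  ring

lemma integral_pentHeight_pow_three (hb : 0 < b) (hbq : 0 < 1 + b * q) (hqb : q ≤ b) :
    ∫ x in -1 / b..b, pentHeight q b x ^ 3 =
      midHeight q ^ 3 * ((q + 1 / b) + (b - q) *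
        ((1 + heightRatio q b) * (1 + heightRatio q b ^ 2))) / 4 := by
  have hint (s t : ℝ) : IntervalIntegrable (fun x => pentHeight q b x ^ 3) volume s t :=
    ((continuous_pentHeight q b).pow 3).intervalIntegrable s t
  rw [← intervalIntegral.integral_add_adjacent_intervals (hint _ q) (hint q _),
    integral_affine_pow_three (pentHeight_eqOn_affine_left hb hbq hqb),
    integral_affine_pow_three (pentHeight_eqOn_affine_right hbq hqb),
    pentHeight_neg_one_div hb hbq hqb, pentHeight_self hbq hqb, pentHeight_right hbq hqb,
    endHeight_eq_heightRatio_mul]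
  ring

lemma covM_pent_zero_zero (hb : 0 < b) (hbq : 0 < 1 + b * q) (hqb : q ≤ b) :
    covM (pent q b) 0 0 =
      ((q + 1 / b) * (1 / b ^ 2 - 2 * q / b + 3 * q ^ 2) + (b - q) *
        (3 * q ^ 2 + 2 * q * b + b ^ 2 + heightRatio q b * (q ^ 2 + 2 * q * b + 3 * b ^ 2))) /
      (6 * ((q + 1 / b) + (b - q) * (1 + heightRatio q b))) := by
  have hr := (midHeight_pos q).ne'
  rw [pent_eq_symmRegion hb hbq hqb,
    covM_symmRegion_Icc_zero_zero ((neg_one_div_lt hb hbq).le.trans hqb)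
      (continuous_pentHeight q b) (fun x => pentHeight_nonneg hb hbq hqb),
    integral_sq_mul_pentHeight hb hbq hqb, integral_pentHeight hb hbq hqb]
  generalize (q + 1 / b) + (b - q) * (1 + heightRatio q b) = area
  field_simp
  ring

lemma covM_pent_one_one (hb : 0 < b) (hbq : 0 < 1 + b * q) (hqb : q ≤ b) :
    covM (pent q b) 1 1 =
      (1 + q ^ 2) * ((q + 1 / b) + (b - q) *
        ((1 + heightRatio q b) * (1 + heightRatio q b ^ 2))) /
      (6 * ((q + 1 / b) + (b - q) * (1 + heightRatio q b))) := by
  have hr := (midHeight_pos q).ne'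
  rw [pent_eq_symmRegion hb hbq hqb,
    covM_symmRegion_Icc_one_one ((neg_one_div_lt hb hbq).le.trans hqb)
      (continuous_pentHeight q b) (fun x => pentHeight_nonneg hb hbq hqb),
    integral_pentHeight_pow_three hb hbq hqb, integral_pentHeight hb hbq hqb, ← midHeight_sq q]
  generalize (q + 1 / b) + (b - q) * (1 + heightRatio q b) = area
  field_simp
  ring

lemma heightRatio_half (b : ℝ) : heightRatio (b / 2) b = 2 * (b ^ 2 + 2) / (b ^ 2 + 4) := by
  rw [heightRatio]
  field_simp
  ring

lemma covM_pent_half_zero_zero (hb : 0 < b) :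
    covM (pent (b / 2) b) 0 0 =
      (24 * b ^ 8 + 63 * b ^ 6 + 2 * b ^ 4 - 4 * b ^ 2 + 16) /
        (24 * b ^ 2 * (2 * b ^ 4 + 7 * b ^ 2 + 4)) := by
  rw [covM_pent_zero_zero hb (by positivity) (by linarith), heightRatio_half]
  field_simp
  ring

lemma covM_pent_half_one_one (hb : 0 < b) :
    covM (pent (b / 2) b) 1 1 =
      ((b ^ 2 + 2) * (b ^ 2 + 4) ^ 3 + b ^ 2 * (3 * b ^ 2 + 8) * (5 * b ^ 4 + 24 * b ^ 2 + 32)) /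
        (48 * (b ^ 2 + 4) * (2 * b ^ 4 + 7 * b ^ 2 + 4)) := by
  rw [covM_pent_one_one hb (by positivity) (by linarith), heightRatio_half]
  field_simp
  ring

lemma le_covM_pent_half_zero_zero (hb : 0 < b) (hlo : 1 / 2 ≤ b ^ 2) (hhi : b ^ 2 ≤ 13 / 25) :
    0.245 ≤ covM (pent (b / 2) b) 0 0 := by
  rw [covM_pent_half_zero_zero hb, le_div_iff₀ (by positivity)]
  obtain ⟨t, ht⟩ : ∃ t, b ^ 2 = 1 / 2 + t := ⟨b ^ 2 - 1 / 2, by ring⟩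
  have ht₀ : 0 ≤ t := by linarith
  have ht₃ : 0 ≤ t ^ 3 := by positivity
  rw [show b ^ 8 = (b ^ 2) ^ 4 by ring, show b ^ 6 = (b ^ 2) ^ 3 by ring,
    show b ^ 4 = (b ^ 2) ^ 2 by ring, ht]
  nlinarith

lemma le_covM_pent_half_one_one (hb : 0 < b) (hlo : 1 / 2 ≤ b ^ 2) :
    0.256 ≤ covM (pent (b / 2) b) 1 1 := by
  rw [covM_pent_half_one_one hb, le_div_iff₀ (by positivity), ← sub_nonneg]
  obtain ⟨t, ht⟩ : ∃ t, b ^ 2 = 1 / 2 + t := ⟨b ^ 2 - 1 / 2, by ring⟩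
  have ht₀ : 0 ≤ t := by linarith
  rw [show b ^ 4 = (b ^ 2) ^ 2 by ring, ht]
  -- Expanded at `b ^ 2 = 1 / 2`, the difference has nonnegative coefficients.
  ring_nf
  positivity

lemma exists_barycenter_condition_half :
    ∃ b : ℝ, 0 < b ∧ b ^ 2 ∈ Set.Icc (1 / 2) (13 / 25) ∧
      (b / 2) ^ 3 * b - (b / 2) ^ 2 * b ^ 2 - (b / 2) ^ 2 + 2 * (b / 2) * b ^ 5 + b / 2 * b +
        3 * b ^ 4 = 1 := by
  have hcont : ContinuousOn (fun B : ℝ => B ^ 3 + 23 / 8 * B ^ 2 + 1 / 4 * B)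
      (Set.Icc (1 / 2) (13 / 25)) := by fun_prop
  obtain ⟨B, hB, hroot⟩ := intermediate_value_Icc (by norm_num) hcont
    (show (1 : ℝ) ∈ _ by constructor <;> norm_num)
  obtain ⟨b, hb, rfl⟩ : ∃ b : ℝ, 0 < b ∧ b ^ 2 = B := by
    have hBpos : 0 < B := by linarith [hB.1]
    exact ⟨√B, Real.sqrt_pos.2 hBpos, Real.sq_sqrt hBpos.le⟩
  exact ⟨b, hb, hB, by linear_combination hroot⟩

end Pentagon

theorem stmt19 :
    ∃ b q : ℝ, 0 < b ∧ q ∈ Set.Ioo (-1/b) b ∧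
      q ^ 3 * b - q ^ 2 * b ^ 2 - q ^ 2 + 2 * q * b ^ 5 + q * b + 3 * b ^ 4 = 1 ∧
      (covM (pent q b) * covM (polarBody (pent q b))).trace > 1 / 8 := by
  obtain ⟨b, hb, ⟨hlo, hhi⟩, hf⟩ := exists_barycenter_condition_half
  have hbq : 0 < 1 + b * (b / 2) := by positivity
  refine ⟨b, b / 2, hb, ⟨neg_one_div_lt hb hbq, half_lt_self hb⟩, hf, ?_⟩
  rw [polarBody_pent hb hbq (half_le_self hb.le), covM_neg]
  calc (1 / 8 : ℝ) < 0.245 ^ 2 + 0.256 ^ 2 := by norm_num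
    _ ≤ covM (pent (b / 2) b) 0 0 ^ 2 + covM (pent (b / 2) b) 1 1 ^ 2 := by
      gcongr
      · exact le_covM_pent_half_zero_zero hb hlo hhi
      · exact le_covM_pent_half_one_one hb hlo
    _ ≤ _ := sq_add_sq_le_trace_covM_mul_self _
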